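/- Let β₁, β₂ ≥ 0, let μ be a Borel probability measure on ℝ, and let m, n : ℝ → ℝ be measurable functions with |m(x)| ≤ 1 and |n(x)| ≤ 1 for all x. Set M := ∫ m dμ and N := ∫ n dμ. Then ∫ [2·tanh(β₁(x + m(x)) + β₂M) − 2m(x) − 2·tanh(β₁(x + n(x)) + β₂N) + 2n(x)]·(m(x) − n(x)) μ(dx) ≤ −2(1 − β₁ − β₂)·∫ (m(x) − n(x))² μ(dx). -/

import Mathlib

open MeasureTheory

lemma aux_tanh_hasDeriv (x : ℝ) : HasDerivAt Real.tanh (1 / Real.cosh x ^ 2) x := by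
  have h := (Real.hasDerivAt_sinh x).div (Real.hasDerivAt_cosh x) (Real.cosh_pos x).ne'
  have e : Real.tanh = Real.sinh / Real.cosh := by
    funext y; exact Real.tanh_eq_sinh_div_cosh y
  rw [e]
  have h2 : Real.cosh x * Real.cosh x - Real.sinh x * Real.sinh x = 1 := by
    have := Real.cosh_sq x
    nlinarith
  rwa [h2] at h

lemma aux_tanh_lip (a b : ℝ) : |Real.tanh a - Real.tanh b| ≤ |a - b| := by
  have h := Convex.norm_image_sub_le_of_norm_hasDerivWithin_le (C := 1) (s := Set.univ)
    (fun x _ => (aux_tanh_hasDeriv x).hasDerivWithinAt) (fun x _ => by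
      rw [Real.norm_eq_abs, abs_of_nonneg (by positivity)]
      have := Real.one_le_cosh x
      rw [div_le_one (by positivity)]
      nlinarith) convex_univ (Set.mem_univ b) (Set.mem_univ a)
  simpa [Real.norm_eq_abs] using h

lemma aux_tanh_meas : Measurable Real.tanh :=
  (continuous_iff_continuousAt.2 fun x => (aux_tanh_hasDeriv x).continuousAt).measurable

theorem dissipativity_estimate (β₁ β₂ : ℝ) (h₁ : 0 ≤ β₁) (h₂ : 0 ≤ β₂)
    (μ : Measure ℝ) [IsProbabilityMeasure μ]
    (m n : ℝ → ℝ) (hm : Measurable m) (hn : Measurable n)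
    (hmb : ∀ x, |m x| ≤ 1) (hnb : ∀ x, |n x| ≤ 1) :
    ∫ x, (2 * Real.tanh (β₁ * (x + m x) + β₂ * ∫ y, m y ∂μ) - 2 * m x
          - 2 * Real.tanh (β₁ * (x + n x) + β₂ * ∫ y, n y ∂μ) + 2 * n x)
        * (m x - n x) ∂μ
      ≤ -2 * (1 - β₁ - β₂) * ∫ x, (m x - n x)^2 ∂μ := by
  have im : Integrable m μ := Integrable.of_bound hm.aestronglyMeasurable 1 (by simpa using .of_forall hmb)
  have inn : Integrable n μ := Integrable.of_bound hn.aestronglyMeasurable 1 (by simpa using .of_forall hnb)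
  have hD : ∫ x, (m x - n x) ∂μ = (∫ y, m y ∂μ) - ∫ y, n y ∂μ := integral_sub im inn
  have id1 : Integrable (fun x => m x - n x) μ := im.sub inn
  have hdb : ∀ x, |m x - n x| ≤ 2 := fun x => by
    have := abs_le.1 (hmb x); have := abs_le.1 (hnb x)
    exact abs_le.2 ⟨by linarith, by linarith⟩
  have id2 : Integrable (fun x => (m x - n x)^2) μ := by
    refine Integrable.of_bound (by fun_prop) 4 (.of_forall fun x => ?_)
    rw [Real.norm_eq_abs, abs_pow]
    nlinarith [hdb x, abs_nonneg (m x - n x)]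
  generalize (∫ y, m y ∂μ) = M at *
  generalize (∫ y, n y ∂μ) = N at *
  have hCS : (M - N)^2 ≤ ∫ x, (m x - n x)^2 ∂μ := by
    have h0 : ∫ x, (2 * (M - N) * (m x - n x) - (M - N)^2) ∂μ ≤ ∫ x, (m x - n x)^2 ∂μ :=
      integral_mono ((id1.const_mul _).sub (integrable_const _)) id2
        (fun x => by nlinarith [sq_nonneg (m x - n x - (M - N))])
    rw [integral_sub (id1.const_mul _) (integrable_const _), integral_const_mul, hD] at h0
    simp at h0
    nlinarith
  have lip : ∀ x, |Real.tanh (β₁ * (x + m x) + β₂ * M) - Real.tanh (β₁ * (x + n x) + β₂ * N)|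
      ≤ β₁ * |m x - n x| + β₂ * |M - N| := fun x => by
    refine (aux_tanh_lip _ _).trans ?_
    rw [show β₁ * (x + m x) + β₂ * M - (β₁ * (x + n x) + β₂ * N)
      = β₁ * (m x - n x) + β₂ * (M - N) by ring]
    refine (abs_add_le _ _).trans ?_
    rw [abs_mul, abs_mul, abs_of_nonneg h₁, abs_of_nonneg h₂]
  have tm := aux_tanh_meas
  have t1 : Measurable fun x => Real.tanh (β₁ * (x + m x) + β₂ * M) := tm.comp (by fun_prop)
  have t2 : Measurable fun x => Real.tanh (β₁ * (x + n x) + β₂ * N) := tm.comp (by fun_prop)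
  have key : ∫ x, (2 * Real.tanh (β₁ * (x + m x) + β₂ * M) - 2 * m x
          - 2 * Real.tanh (β₁ * (x + n x) + β₂ * N) + 2 * n x) * (m x - n x) ∂μ
      ≤ ∫ x, ((2 * β₁ + β₂ - 2) * (m x - n x)^2 + β₂ * (M - N)^2) ∂μ := by
    refine integral_mono ?_ ((id2.const_mul _).add (integrable_const _)) (fun x => ?_)
    · refine Integrable.of_bound (by fun_prop) ((2 * (β₁ * 2 + β₂ * |M - N|) + 4) * 2)
        (.of_forall fun x => ?_)
      rw [Real.norm_eq_abs, abs_mul]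
      have hb := lip x
      have hd := hdb x
      have hc : β₁ * |m x - n x| ≤ β₁ * 2 := by gcongr
      gcongr
      have := abs_le.1 hb
      have := abs_le.1 hd
      exact abs_le.2 ⟨by linarith, by linarith⟩
    · have hb := lip x
      generalize Real.tanh (β₁ * (x + m x) + β₂ * M) = S at *
      generalize Real.tanh (β₁ * (x + n x) + β₂ * N) = T at *
      have h3 : (S - T) * (m x - n x) ≤ (β₁ * |m x - n x| + β₂ * |M - N|) * |m x - n x| := by
        refine (le_abs_self _).trans ?_
        rw [abs_mul]; gcongr
      have h4 : β₂ * (2 * |M - N| * |m x - n x|) ≤ β₂ * ((M - N)^2 + (m x - n x)^2) := by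
        gcongr
        rw [← sq_abs (M - N), ← sq_abs (m x - n x)]
        exact two_mul_le_add_sq _ _
      have h5 := sq_abs (m x - n x)
      have h6 : β₁ * |m x - n x|^2 = β₁ * (m x - n x)^2 := by rw [h5]
      show (2 * S - 2 * m x - 2 * T + 2 * n x) * (m x - n x) ≤
        (2 * β₁ + β₂ - 2) * (m x - n x)^2 + β₂ * (M - N)^2
      linarith
  refine key.trans ?_
  rw [integral_add (id2.const_mul _) (integrable_const _), integral_const_mul]
  simp
  have := mul_le_mul_of_nonneg_left hCS h₂
  linarith
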